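/- arXiv:1712.09945 — 2 statements merged into one kernel-verified Lean document; each statement's English description precedes it below -/
import Mathlib

section
/- Let n ≥ 2 and let c : Fin n → Fin n → ℝ be symmetric, i.e. c k l = c l k for all k, l. Suppose that for every ρ ∈ ℂⁿ belonging to the isotropic set V := {ρ ∈ ℂⁿ : Σ_j ρ_j² = 0 and ‖ρ‖ = √2} one has Σ_{k,l} ρ_k ρ_l · (c k l) = 0. Then c k l = 0 whenever k ≠ l, and c k k = c l l for all k, l. -/
/-- If a symmetric matrix of coefficients `c k l` satisfies
`∑_{k,l} ρ_k ρ_l c_{kl} = 0` for every isotropic vector `ρ ∈ ℂⁿ` with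
`∑ ρ_j² = 0` and `‖ρ‖ = √2`, then the off-diagonal entries vanish and the
diagonal entries are all equal. -/
theorem stmt_1 (n : ℕ) (hn : 2 ≤ n) (c : Fin n → Fin n → ℝ)
    (hsym : ∀ k l, c k l = c l k)
    (hvan : ∀ ρ : EuclideanSpace ℂ (Fin n),
      (∑ j, ρ j ^ 2 = 0) → ‖ρ‖ = Real.sqrt 2 →
      ∑ k, ∑ l, ρ k * ρ l * (c k l : ℂ) = 0) :
    (∀ k l, k ≠ l → c k l = 0) ∧ (∀ k l, c k k = c l l) := by
  have key : ∀ k l, k ≠ l → c k l = 0 ∧ c k k = c l l := by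
    intro k l hkl
    let f : Fin n → ℂ := fun j => (if j = k then 1 else 0) + (if j = l then Complex.I else 0)
    have hf : ∀ g : Fin n → ℂ, ∑ j, f j * g j = g k + Complex.I * g l := by
      intro g
      simp [f, add_mul, Finset.sum_add_distrib]
    have fk : f k = 1 := by simp [f, hkl]
    have fl : f l = Complex.I := by simp [f, hkl.symm]
    have h := hvan (WithLp.toLp 2 f) (by
        simp only [pow_two]
        rw [hf, fk, fl]; simp) (by
        rw [EuclideanSpace.norm_eq]
        congr 1
        have : ∀ j, ‖f j‖ ^ 2 = (if j = k then (1:ℝ) else 0) + (if j = l then 1 else 0) := by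
          intro j
          by_cases h1 : j = k
          · subst h1; simp [fk, hkl]
          · by_cases h2 : j = l
            · subst h2; simp [fl, h1]
            · simp [f, h1, h2]
        simp only [this, Finset.sum_add_distrib]
        simp
        norm_num)
    simp only [mul_assoc, ← Finset.mul_sum] at h
    simp only [hf] at h
    rw [hsym l k] at h
    have hr := congrArg Complex.re h
    have hi := congrArg Complex.im h
    simp at hr hi
    constructor <;> linarith
  refine ⟨fun k l h => (key k l h).1, fun k l => ?_⟩
  by_cases h : k = l
  · rw [h]
  · exact (key k l h).2
end

section
/- Let n ≥ 2 and let d : Fin n → ℝ. Suppose that for every ρ ∈ ℂⁿ belonging to the isotropic set V := {ρ ∈ ℂⁿ : Σ_j ρ_j² = 0 and ‖ρ‖ = √2} one has Σ_{j,k} ρ_j ρ_k · (d j) = 0 (where the double sum runs over all pairs (j,k) ∈ Fin n × Fin n). Then d j = 0 for all j. -/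
/-- If coefficients `d j` (corresponding to `c^j_{kk} = d_j`, independent of `k`) satisfy
`∑_{j,k} ρ_j ρ_k d_j = 0` for every isotropic vector `ρ ∈ ℂⁿ` with `∑ ρ_j² = 0` and
`‖ρ‖ = √2`, then `d ≡ 0`. -/
theorem stmt_2 (n : ℕ) (hn : 2 ≤ n) (d : Fin n → ℝ)
    (hvan : ∀ ρ : EuclideanSpace ℂ (Fin n),
      (∑ j, ρ j ^ 2 = 0) → ‖ρ‖ = Real.sqrt 2 →
      ∑ j, ∑ k, ρ j * ρ k * (d j : ℂ) = 0) :
    ∀ j, d j = 0 := by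
  intro a
  haveI : Nontrivial (Fin n) := Fin.nontrivial_iff_two_le.mpr hn
  obtain ⟨b, hb⟩ := exists_ne a
  let f : Fin n → ℂ := fun j => if j = a then 1 else if j = b then Complex.I else 0
  have fa : f a = 1 := by simp [f]
  have fb : f b = Complex.I := by simp [f, hb]
  have f0 : ∀ j, j ≠ a ∧ j ≠ b → f j = 0 := fun j h => by simp [f, h.1, h.2]
  have h := hvan (WithLp.toLp 2 f) ?_ ?_
  · have e : ∑ j, ∑ k, f j * f k * (d j : ℂ) = (∑ j, f j * (d j : ℂ)) * ∑ k, f k := by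
      rw [Finset.sum_mul_sum]
      exact Finset.sum_congr rfl fun j _ => Finset.sum_congr rfl fun k _ => by ring
    change ∑ j, ∑ k, f j * f k * (d j : ℂ) = 0 at h
    rw [e, Fintype.sum_eq_add a b hb.symm (fun j hj => by simp [f0 j hj]),
      Fintype.sum_eq_add a b hb.symm (fun j hj => f0 j hj), fa, fb] at h
    rcases mul_eq_zero.mp h with h | h
    · simpa using congrArg Complex.re h
    · simpa using congrArg Complex.re h
  · change ∑ j, f j ^ 2 = 0
    rw [Fintype.sum_eq_add a b hb.symm (fun j hj => by simp [f0 j hj]), fa, fb]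
    simp
  · rw [EuclideanSpace.norm_eq]
    congr 1
    change ∑ j, ‖f j‖ ^ 2 = 2
    rw [Fintype.sum_eq_add a b hb.symm (fun j hj => by simp [f0 j hj]), fa, fb]
    norm_num
end
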